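/- arXiv:math/9602213 — 6 statements merged into one kernel-verified Lean document; each statement's English description precedes it below -/
import Mathlib

section
/- Let L be a Lagrangean subspace of a finite-dimensional complex symplectic vector space (V,ω) with compatible real structure τ, and let γ(X,Y) = i·ω(X, τY). Then the restriction of γ to L is nondegenerate (i.e. for x ∈ L, if γ(x,y) = 0 for all y ∈ L then x = 0) if and only if L ∩ τ(L) = {0}, where τ(L) = {τx : x ∈ L}. -/
open ComplexConjugate

/-!
Since `τ` is an involution conjugating `ω`, we have `ω (τ x) y = conj (ω x (τ y))`. Hence a vector
`x ∈ N` lies in the radical of `ω (·, τ ·)` restricted to `N` exactly when `τ x` is `ω`-orthogonal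
to `N`. A Lagrangian `L` is its own orthogonal, so the radical of the restriction to `L` is
`L ∩ τ(L)`.
-/

theorem map_eq_comap_of_involutive {R M : Type*} [Semiring R] [AddCommMonoid M] [Module R M]
    {σ : R →+* R} [RingHomSurjective σ] {f : M →ₛₗ[σ] M} (hf : Function.Involutive f)
    (N : Submodule R M) : N.map f = N.comap f :=
  SetLike.coe_injective (congrFun hf.image_eq_preimage_symm N)

theorem orthogonal_eq_self_of_two_mul_finrank_eq {K V : Type*} [Field K] [AddCommGroup V]
    [Module K V] [FiniteDimensional K V] {ω : LinearMap.BilinForm K V} (hω : ω.Nondegenerate)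
    {L : Submodule K V} (hiso : L ≤ ω.orthogonal L)
    (hdim : 2 * Module.finrank K L = Module.finrank K V) : ω.orthogonal L = L := by
  have hfinrank := LinearMap.BilinForm.finrank_orthogonal hω L
  exact (Submodule.eq_of_le_of_finrank_eq hiso (by lia)).symm

section RealStructure

variable {K V : Type*} [CommRing K] [StarRing K] [AddCommGroup V] [Module K V]

/-- A real structure on the space `V` compatible with the bilinear form `ω`: an antilinear
involution `τ` of `V` that transports `ω` to its conjugate. Scalars are conjugated by the star
operation of the commutative ring `K`. -/
structure IsRealStructure (ω : LinearMap.BilinForm K V) (τ : V →ₗ⋆[K] V) : Prop where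
  involutive : Function.Involutive τ
  apply_apply : ∀ x y, ω (τ x) (τ y) = conj (ω x y)

namespace IsRealStructure

variable {ω : LinearMap.BilinForm K V} {τ : V →ₗ⋆[K] V}

theorem apply_left (hτ : IsRealStructure ω τ) (x y : V) : ω (τ x) y = conj (ω x (τ y)) := by
  rw [← hτ.apply_apply, hτ.involutive]

theorem apply_left_eq_zero_iff (hτ : IsRealStructure ω τ) {x y : V} :
    ω (τ x) y = 0 ↔ ω x (τ y) = 0 := by
  rw [hτ.apply_left, starRingEnd_apply, star_eq_zero]

theorem ker_domRestrict₁₂_compl₂ (hτ : IsRealStructure ω τ) (hω : ω.IsRefl)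
    (N : Submodule K V) :
    LinearMap.ker ((ω.compl₂ τ).domRestrict₁₂ N N) =
      ((ω.orthogonal N).map τ).comap N.subtype := by
  ext x
  simp only [LinearMap.mem_ker, LinearMap.ext_iff, LinearMap.domRestrict₁₂_apply,
    LinearMap.compl₂_apply, LinearMap.zero_apply, Subtype.forall,
    map_eq_comap_of_involutive hτ.involutive, Submodule.mem_comap, Submodule.subtype_apply,
    LinearMap.BilinForm.mem_orthogonal_iff]
  exact forall₂_congr fun y _ ↦ hτ.apply_left_eq_zero_iff.symm.trans hω.eq_iff

end IsRealStructure

theorem stmt_1_general {ω : LinearMap.BilinForm K V} (hω : ω.IsRefl) {τ : V →ₗ⋆[K] V}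
    (hτ : IsRealStructure ω τ) {L : Submodule K V} (hL : ω.orthogonal L = L) :
    ((ω.compl₂ τ).domRestrict₁₂ L L).SeparatingLeft ↔ Disjoint L (L.map τ) := by
  rw [LinearMap.separatingLeft_iff_ker_eq_bot, hτ.ker_domRestrict₁₂_compl₂ hω, hL,
    Submodule.disjoint_iff_comap_eq_bot]

end RealStructure

/-- Let `L` be a Lagrangean subspace of a finite-dimensional complex symplectic vector space
`(V, ω)` with compatible real structure `τ`, and `γ(x,y) = i·ω(x, τ y)`. Then `γ|L` is
nondegenerate iff `L ∩ τ(L) = 0` (equivalently: `x ∈ L` with `τ x ∈ L` forces `x = 0`,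
since `τ` is an involution). -/
theorem stmt_1 (V : Type*) [AddCommGroup V] [Module ℂ V] [FiniteDimensional ℂ V]
    (ω : V →ₗ[ℂ] V →ₗ[ℂ] ℂ)
    (halt : ∀ x, ω x x = 0)
    (hnondeg : ∀ x, (∀ y, ω x y = 0) → x = 0)
    (τ : V → V)
    (hτadd : ∀ x y, τ (x + y) = τ x + τ y)
    (hτsmul : ∀ (c : ℂ) (x : V), τ (c • x) = conj c • τ x)
    (hτinv : ∀ x, τ (τ x) = x)
    (hcompat : ∀ x y, ω (τ x) (τ y) = conj (ω x y))
    (L : Submodule ℂ V)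
    (hLiso : ∀ x ∈ L, ∀ y ∈ L, ω x y = 0)
    (hLdim : 2 * Module.finrank ℂ L = Module.finrank ℂ V) :
    (∀ x ∈ L, (∀ y ∈ L, Complex.I * ω x (τ y) = 0) → x = 0) ↔
      (∀ x ∈ L, τ x ∈ L → x = 0) := by
  have hrefl : LinearMap.BilinForm.IsRefl ω := LinearMap.IsAlt.isRefl halt
  have hL : LinearMap.BilinForm.orthogonal ω L = L :=
    orthogonal_eq_self_of_two_mul_finrank_eq (hrefl.nondegenerate_iff_separatingLeft.mpr hnondeg)
      (fun x hx y hy ↦ hLiso y hy x hx) hLdim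
  let σ : V →ₗ⋆[ℂ] V := { toFun := τ, map_add' := hτadd, map_smul' := hτsmul }
  have hσ : IsRealStructure ω σ := ⟨hτinv, hcompat⟩
  simpa [LinearMap.SeparatingLeft, LinearMap.domRestrict₁₂_apply, Submodule.disjoint_def,
    map_eq_comap_of_involutive hσ.involutive, σ] using stmt_1_general hrefl hσ hL
end

section
/- Let d ≥ 2, let H be a symmetric ℂ-multilinear form in d arguments on ℂⁿ, and define F(z_0, Z) = H(Z,…,Z)/z_0^{d−2} on {(z_0,Z) ∈ ℂ × ℂⁿ : z_0 ≠ 0}. Then for every Z ∈ ℂⁿ the complex Hessian bilinear form B of F at the point ζ = (1, Z) satisfies B(ζ, ζ̄) = −(d−2)·H(Z,…,Z) + d·H(Z,…,Z, conj(Z)), where ζ̄ = (1, conj(Z)) and conj denotes entrywise complex conjugation. -/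
open ComplexConjugate

/-!
`F` is homogeneous of degree `2`, so `dF` is homogeneous of degree `1`, and Euler's identity applied
to `w ↦ dF_w(η)` gives `B(ζ, η) = dF_ζ(η)`. The second derivative is thus reduced to a first one,
which the product rule for multilinear maps computes.
-/

theorem continuous_multilinearMap_of_finiteDimensional {𝕜 ι F : Type*} {E : ι → Type*}
    [Finite ι] [NontriviallyNormedField 𝕜] [CompleteSpace 𝕜]
    [∀ i, AddCommGroup (E i)] [∀ i, Module 𝕜 (E i)] [∀ i, TopologicalSpace (E i)]
    [∀ i, IsTopologicalAddGroup (E i)] [∀ i, ContinuousSMul 𝕜 (E i)] [∀ i, T2Space (E i)]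
    [∀ i, FiniteDimensional 𝕜 (E i)]
    [AddCommMonoid F] [Module 𝕜 F] [TopologicalSpace F] [ContinuousAdd F] [ContinuousSMul 𝕜 F]
    (H : MultilinearMap 𝕜 E F) : Continuous H := by
  classical
  cases nonempty_fintype ι
  let b i := Module.finBasis 𝕜 (E i)
  have coord_continuous (i) (j) : Continuous fun v : ∀ i, E i => (b i).coord j (v i) :=
    ((b i).coord j).continuous_of_finiteDimensional.comp (continuous_apply i)
  have expansion : ⇑H = fun v => ∑ r : ∀ i, Fin (Module.finrank 𝕜 (E i)),
      (∏ i, (b i).coord (r i) (v i)) • H fun i => b i (r i) := by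
    funext v
    conv_lhs => rw [show v = fun i => ∑ j, (b i).coord j (v i) • b i j from
      funext fun i => ((b i).sum_repr (v i)).symm]
    simp only [H.map_sum, H.map_smul_univ]
  rw [expansion]
  fun_prop

theorem sum_apply_update_of_symm {ι E F : Type*} [Fintype ι] [DecidableEq ι] [AddCommMonoid F]
    (H : (ι → E) → F) (hsymm : ∀ (σ : Equiv.Perm ι) (v : ι → E), H (v ∘ σ) = H v)
    (x y : E) (i : ι) :
    ∑ j, H (Function.update (fun _ => x) j y) =
      Fintype.card ι • H (Function.update (fun _ => x) i y) := by
  refine Finset.sum_eq_card_nsmul fun j _ => ?_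
  rw [← hsymm (Equiv.swap j i), Function.update_comp_equiv]
  simp [Function.comp_def]

section Homogeneous

/-- `f` is homogeneous of degree `k`. Only nonzero scalars are tested, so that negative degrees are
meaningful. -/
def IsHomogeneousMap (𝕜 : Type*) {E F : Type*} [GroupWithZero 𝕜] [SMul 𝕜 E] [SMul 𝕜 F] (k : ℤ)
    (f : E → F) : Prop :=
  ∀ t : 𝕜, t ≠ 0 → ∀ x, f (t • x) = t ^ k • f x

variable {𝕜 E F : Type*} [NontriviallyNormedField 𝕜] [NormedAddCommGroup E] [NormedSpace 𝕜 E]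
  [NormedAddCommGroup F] [NormedSpace 𝕜 F] {k : ℤ} {f : E → F} {x : E}

namespace IsHomogeneousMap

protected theorem fderiv (hf : IsHomogeneousMap 𝕜 k f) :
    IsHomogeneousMap 𝕜 (k - 1) (fderiv 𝕜 f) := by
  intro t ht x
  have chain_rule : t • fderiv 𝕜 f (t • x) = t ^ k • fderiv 𝕜 f x := by
    rw [← fderiv_comp_smul, funext (hf t ht)]
    exact congrFun (fderiv_const_smul_field (t ^ k)) x
  rw [zpow_sub_one₀ ht, mul_comm, mul_smul, ← chain_rule, inv_smul_smul₀ ht]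

theorem fderiv_apply_self (hf : IsHomogeneousMap 𝕜 k f) (hdiff : DifferentiableAt 𝕜 f x) :
    fderiv 𝕜 f x x = (k : 𝕜) • f x := by
  have along_ray : HasDerivAt (fun t : 𝕜 => f (t • x)) (fderiv 𝕜 f x x) 1 :=
    hdiff.hasFDerivAt.comp_hasDerivAt_of_eq (1 : 𝕜)
      (by simpa using (hasDerivAt_id (1 : 𝕜)).smul_const x) (one_smul 𝕜 x).symm
  have of_power : HasDerivAt (fun t : 𝕜 => t ^ k • f x) ((k : 𝕜) • f x) 1 := by
    simpa using (hasDerivAt_zpow k (1 : 𝕜) (.inl one_ne_zero)).smul_const (f x)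
  refine along_ray.unique (of_power.congr_of_eventuallyEq ?_)
  filter_upwards [isOpen_ne.mem_nhds (one_ne_zero : (1 : 𝕜) ≠ 0)] with t ht using hf t ht x

theorem fderiv_fderiv_apply_self (hf : IsHomogeneousMap 𝕜 k f)
    (hdiff : DifferentiableAt 𝕜 (fderiv 𝕜 f) x) (v : E) :
    fderiv 𝕜 (fun w => fderiv 𝕜 f w v) x x = ((k - 1 : ℤ) : 𝕜) • fderiv 𝕜 f x v := by
  have h_homog : IsHomogeneousMap 𝕜 (k - 1) fun w => fderiv 𝕜 f w v := fun t ht w => by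
    simp only [hf.fderiv t ht w, smul_apply]
  exact h_homog.fderiv_apply_self (hdiff.clm_apply (differentiableAt_const v))

end IsHomogeneousMap

end Homogeneous

theorem contDiffAt_zpow {𝕜 : Type*} [NontriviallyNormedField 𝕜] {x : 𝕜} (hx : x ≠ 0) (k : ℤ)
    {n : WithTop ℕ∞} : ContDiffAt 𝕜 n (fun z : 𝕜 => z ^ k) x := by
  obtain ⟨m, rfl | rfl⟩ := k.eq_nat_or_neg
  · simp only [zpow_natCast]
    exact contDiffAt_id.pow m
  · simp only [zpow_neg, zpow_natCast]
    exact (contDiffAt_id.pow m).inv (pow_ne_zero m hx)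

section RMap

variable {𝕜 ι E : Type*} [NontriviallyNormedField 𝕜] [Fintype ι] [NormedAddCommGroup E]
  [NormedSpace 𝕜 E] (H : ContinuousMultilinearMap 𝕜 (fun _ : ι => E) 𝕜)

/-- The generalized r-map image `(z₀, Z) ↦ H(Z, …, Z) / z₀ ^ (d - 2)` of the form `H` in
`d = Fintype.card ι` arguments. The exponent is an integer, so nothing is truncated when `d < 2`. -/
def rMapImage (u : 𝕜 × E) : 𝕜 :=
  H (fun _ => u.2) / u.1 ^ (Fintype.card ι - 2 : ℤ)

theorem isHomogeneousMap_rMapImage : IsHomogeneousMap 𝕜 2 (rMapImage H) := by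
  intro t ht u
  have numerator : H (fun _ => t • u.2) = t ^ Fintype.card ι * H fun _ => u.2 := by
    simpa using H.map_smul_univ (fun _ => t) fun _ => u.2
  have power : t ^ (Fintype.card ι - 2 : ℤ) * t ^ (2 : ℤ) = t ^ Fintype.card ι := by
    rw [← zpow_add₀ ht, sub_add_cancel, zpow_natCast]
  simp only [rMapImage, Prod.smul_fst, Prod.smul_snd, smul_eq_mul, numerator, mul_zpow, ← power,
    mul_assoc, mul_div_mul_left _ _ (zpow_ne_zero _ ht), mul_div_assoc]

variable {H} in
theorem contDiffAt_rMapImage {u : 𝕜 × E} (hu : u.1 ≠ 0) {n : WithTop ℕ∞} :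
    ContDiffAt 𝕜 n (rMapImage H) u :=
  have numerator : ContDiff 𝕜 n fun u : 𝕜 × E => H fun _ => u.2 :=
    H.contDiff.comp (contDiff_pi.2 fun _ => contDiff_snd)
  numerator.contDiffAt.div ((contDiffAt_zpow hu _).comp u contDiffAt_fst) (zpow_ne_zero _ hu)

theorem rMapImage_eq_div_pow (hcard : 2 ≤ Fintype.card ι) :
    rMapImage H = fun u => H (fun _ => u.2) / u.1 ^ (Fintype.card ι - 2) := by
  funext u
  rw [rMapImage, ← zpow_natCast, Nat.cast_sub hcard, Nat.cast_ofNat]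

theorem fderiv_rMapImage_apply [DecidableEq ι] {z₀ : 𝕜} (hz₀ : z₀ ≠ 0) (Z : E) (η : 𝕜 × E) :
    fderiv 𝕜 (rMapImage H) (z₀, Z) η =
      (∑ i, H (Function.update (fun _ => Z) i η.2) -
        (Fintype.card ι - 2 : 𝕜) * (η.1 / z₀) * H fun _ => Z) /
          z₀ ^ (Fintype.card ι - 2 : ℤ) := by
  have as_product : rMapImage H = fun u => (H fun _ => u.2) * u.1 ^ (2 - Fintype.card ι : ℤ) := by
    funext u
    rw [rMapImage, div_eq_mul_inv, ← zpow_neg, neg_sub]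
  have numerator := HasFDerivAt.multilinear_comp (f := H)
    (fun _ : ι => hasFDerivAt_snd (𝕜 := 𝕜) (p := (z₀, Z)))
  have power : HasFDerivAt (fun u : 𝕜 × E => u.1 ^ (2 - Fintype.card ι : ℤ)) _ (z₀, Z) :=
    (hasDerivAt_zpow _ z₀ (.inl hz₀)).comp_hasFDerivAt_of_eq (z₀, Z)
      (hasFDerivAt_fst (𝕜 := 𝕜)) rfl
  have product_rule : fderiv 𝕜 (rMapImage H) (z₀, Z) η =
      (H fun _ => Z) * ((2 - Fintype.card ι : 𝕜) * z₀ ^ (2 - Fintype.card ι - 1 : ℤ) * η.1) +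
        z₀ ^ (2 - Fintype.card ι : ℤ) * ∑ i, H (Function.update (fun _ => Z) i η.2) := by
    rw [as_product, (numerator.fun_mul power).fderiv]
    simp
  rw [product_rule, zpow_sub_one₀ hz₀, ← neg_sub (Fintype.card ι : ℤ) 2, zpow_neg]
  field_simp
  ring

theorem stmt_4_general [DecidableEq ι] {z₀ : 𝕜} (hz₀ : z₀ ≠ 0) (Z : E) (η : 𝕜 × E) :
    fderiv 𝕜 (fun w => fderiv 𝕜 (rMapImage H) w η) (z₀, Z) (z₀, Z) =
      (∑ i, H (Function.update (fun _ => Z) i η.2) -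
        (Fintype.card ι - 2 : 𝕜) * (η.1 / z₀) * H fun _ => Z) /
          z₀ ^ (Fintype.card ι - 2 : ℤ) := by
  have fderiv_differentiable : DifferentiableAt 𝕜 (fderiv 𝕜 (rMapImage H)) (z₀, Z) :=
    ((contDiffAt_rMapImage (n := 2) hz₀).fderiv_right (m := 1) (by norm_num)).differentiableAt
      one_ne_zero
  rw [(isHomogeneousMap_rMapImage H).fderiv_fderiv_apply_self fderiv_differentiable,
    ← fderiv_rMapImage_apply H hz₀]
  norm_num

end RMap

/-- For a symmetric `d`-multilinear form `H` on `ℂⁿ` (`d ≥ 2`) and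
`F(z₀, Z) = H(Z,…,Z)/z₀^{d−2}`, the complex Hessian bilinear form `B` of `F` at the point
`ζ = (1, Z)` satisfies `B(ζ, ζ̄) = −(d−2)·H(Z,…,Z) + d·H(Z,…,Z, conj Z)`. -/
theorem stmt_4 (n d : ℕ) (hd : 2 ≤ d)
    (H : MultilinearMap ℂ (fun _ : Fin d => (Fin n → ℂ)) ℂ)
    (hsymm : ∀ (σ : Equiv.Perm (Fin d)) (v : Fin d → (Fin n → ℂ)), H (v ∘ σ) = H v)
    (Z : Fin n → ℂ) :
    fderiv ℂ
        (fun w : ℂ × (Fin n → ℂ) =>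
          fderiv ℂ (fun u : ℂ × (Fin n → ℂ) => H (fun _ => u.2) / u.1 ^ (d - 2)) w
            ((1 : ℂ), fun j => conj (Z j)))
        ((1 : ℂ), Z) ((1 : ℂ), Z) =
      -((d : ℂ) - 2) * H (fun _ => Z) +
        (d : ℂ) * H (Function.update (fun _ => Z) (⟨d - 1, by omega⟩ : Fin d)
          (fun j => conj (Z j))) := by
  let Hc : ContinuousMultilinearMap ℂ (fun _ : Fin d => Fin n → ℂ) ℂ :=
    ⟨H, continuous_multilinearMap_of_finiteDimensional H⟩
  have Hc_apply (v) : Hc v = H v := rfl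
  have general := stmt_4_general Hc one_ne_zero Z (1, fun j => conj (Z j))
  simp only [rMapImage_eq_div_pow Hc (by simpa using hd), Fintype.card_fin, Hc_apply, one_zpow,
    sum_apply_update_of_symm H hsymm Z _ ⟨d - 1, by omega⟩] at general
  rw [general, nsmul_eq_mul]
  ring
end

section
/- Let h : ℝⁿ → ℝ be a polynomial function homogeneous of degree d ≥ 1 and let H be a nonempty subset of the level set {x ∈ ℝⁿ : h(x) = 1} that is open in the subspace topology of {h = 1}. If A : ℝⁿ → ℝⁿ is a linear map with A(H) ⊆ H, then h(Ax) = h(x) for all x ∈ ℝⁿ. -/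
/-!
Let `f` be positively homogeneous of degree `r ≠ 0` and let `f x₀ = 1`. Every `y` near `x₀` can be
rescaled into the level set `{f = 1}` by the factor `f y ^ (-1 / r)`, which is close to `1`. Hence a
function `g` of the same degree which equals `1` on `{f = 1}` near `x₀` satisfies `g y / f y = 1`
on a full neighbourhood of `x₀`. If both functions are analytic, the identity theorem propagates
`g = f` to the whole space. Apply this to `g = f ∘ A`.
-/

open Set Filter Topology

/-- A real-valued function is positively homogeneous of (real) degree `r` if scaling the argument by
`c > 0` scales the value by `c ^ r`. Nothing is required of negative scalars, for which `Real.rpow`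
does not give the expected powers. -/
def PositivelyHomogeneous {E : Type*} [SMul ℝ E] (r : ℝ) (f : E → ℝ) : Prop :=
  ∀ ⦃c : ℝ⦄, 0 < c → ∀ x, f (c • x) = c ^ r * f x

theorem PositivelyHomogeneous.comp_linearMap {E F : Type*} [AddCommGroup E] [Module ℝ E]
    [AddCommGroup F] [Module ℝ F] {r : ℝ} {f : F → ℝ} (hf : PositivelyHomogeneous r f)
    (A : E →ₗ[ℝ] F) : PositivelyHomogeneous r (f ∘ A) := fun c hc x => by
  simp only [Function.comp_apply, map_smul, hf hc]

/-- The radial projection `y ↦ f y ^ (-1 / r) • y` of `{f > 0}` onto the level set `{f = 1}` of a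
positively homogeneous function `f` of degree `r ≠ 0`; its values outside `{f > 0}` are junk. -/
noncomputable def radialProj {E : Type*} [SMul ℝ E] (r : ℝ) (f : E → ℝ) (y : E) : E :=
  f y ^ (-r⁻¹) • y

section RadialProj

variable {E : Type*} {r : ℝ} {f g : E → ℝ}

theorem PositivelyHomogeneous.apply_radialProj [SMul ℝ E] (hg : PositivelyHomogeneous r g)
    (hr : r ≠ 0) {y : E} (hy : 0 < f y) : g (radialProj r f y) = (f y)⁻¹ * g y := by
  rw [radialProj, hg (Real.rpow_pos_of_pos hy _), ← Real.rpow_mul hy.le, neg_mul,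
    inv_mul_cancel₀ hr, Real.rpow_neg_one]

variable [AddCommGroup E] [Module ℝ E] [TopologicalSpace E] [ContinuousSMul ℝ E] {x₀ : E}

theorem tendsto_radialProj (r : ℝ) (hcont : ContinuousAt f x₀) (h₀ : f x₀ = 1) :
    Tendsto (radialProj r f) (𝓝 x₀) (𝓝 x₀) := by
  have hproj : ContinuousAt (radialProj r f) x₀ :=
    (hcont.rpow_const (Or.inl (h₀ ▸ one_ne_zero))).smul continuousAt_id
  simpa only [ContinuousAt, radialProj, h₀, Real.one_rpow, one_smul] using hproj

theorem PositivelyHomogeneous.tendsto_radialProj_nhdsWithin (hf : PositivelyHomogeneous r f)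
    (hr : r ≠ 0) (hcont : ContinuousAt f x₀) (h₀ : f x₀ = 1) :
    Tendsto (radialProj r f) (𝓝 x₀) (𝓝[{x | f x = 1}] x₀) := by
  have hpos : ∀ᶠ y in 𝓝 x₀, 0 < f y := hcont.eventually_const_lt (h₀ ▸ one_pos)
  refine tendsto_nhdsWithin_iff.2 ⟨tendsto_radialProj r hcont h₀, hpos.mono fun y hy => ?_⟩
  exact (hf.apply_radialProj hr hy).trans (inv_mul_cancel₀ hy.ne')

theorem PositivelyHomogeneous.eventuallyEq_of_eq_one_on_levelSet
    (hf : PositivelyHomogeneous r f) (hg : PositivelyHomogeneous r g) (hr : r ≠ 0)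
    (hcont : ContinuousAt f x₀) (h₀ : f x₀ = 1)
    (hone : ∀ᶠ x in 𝓝[{x | f x = 1}] x₀, g x = 1) : g =ᶠ[𝓝 x₀] f := by
  have hpos : ∀ᶠ y in 𝓝 x₀, 0 < f y := hcont.eventually_const_lt (h₀ ▸ one_pos)
  have hproj : ∀ᶠ y in 𝓝 x₀, g (radialProj r f y) = 1 :=
    (hf.tendsto_radialProj_nhdsWithin hr hcont h₀).eventually hone
  filter_upwards [hpos, hproj] with y hy hgy
  rwa [hg.apply_radialProj hr hy, inv_mul_eq_one₀ hy.ne', eq_comm] at hgy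

end RadialProj

section Analytic

variable {E : Type*} [NormedAddCommGroup E] [NormedSpace ℝ E] {r : ℝ} {f g : E → ℝ}

theorem PositivelyHomogeneous.eqOn_of_eq_one_on_levelSet {S : Set E} {x₀ : E}
    (hf : PositivelyHomogeneous r f) (hg : PositivelyHomogeneous r g) (hr : r ≠ 0)
    (hfa : AnalyticOnNhd ℝ f S) (hga : AnalyticOnNhd ℝ g S) (hS : IsPreconnected S)
    (hx₀ : x₀ ∈ S) (h₀ : f x₀ = 1) (hone : ∀ᶠ x in 𝓝[{x | f x = 1}] x₀, g x = 1) :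
    EqOn g f S :=
  hga.eqOn_of_preconnected_of_eventuallyEq hfa hS hx₀ <|
    hf.eventuallyEq_of_eq_one_on_levelSet hg hr (hfa x₀ hx₀).continuousAt h₀ hone

theorem stmt_7_general {h : E → ℝ} (hr : r ≠ 0) (hana : AnalyticOnNhd ℝ h univ)
    (hhom : PositivelyHomogeneous r h) {H : Set E} (hHne : H.Nonempty)
    (hHopen : ∃ U : Set E, IsOpen U ∧ H = U ∩ {x | h x = 1})
    (A : E →L[ℝ] E) (hA : ∀ x ∈ H, h (A x) = 1) (x : E) : h (A x) = h x := by
  obtain ⟨U, hU, rfl⟩ := hHopen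
  obtain ⟨x₀, hx₀U, hx₀⟩ := hHne
  have hone : ∀ᶠ y in 𝓝[{y | h y = 1}] x₀, h (A y) = 1 :=
    eventually_of_mem (inter_comm U _ ▸ inter_mem_nhdsWithin _ (hU.mem_nhds hx₀U)) hA
  have hanaA : AnalyticOnNhd ℝ (h ∘ A) univ :=
    hana.comp (A.analyticOnNhd univ) (mapsTo_univ _ _)
  have hhomA : PositivelyHomogeneous r (h ∘ A) := hhom.comp_linearMap A.toLinearMap
  exact hhom.eqOn_of_eq_one_on_levelSet hhomA hr hana hanaA
    isPreconnected_univ (mem_univ x₀) hx₀ hone (mem_univ x)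

end Analytic

/-- If `h : ℝⁿ → ℝ` is a polynomial function homogeneous of degree `d ≥ 1`, `H` is a nonempty
relatively open subset of the level set `{h = 1}`, and `A` is a linear map with `A(H) ⊆ H`,
then `h ∘ A = h` on all of `ℝⁿ`. -/
theorem stmt_7 (n d : ℕ) (hd : 1 ≤ d) (h : (Fin n → ℝ) → ℝ)
    (hpoly : ∃ p : MvPolynomial (Fin n) ℝ, ∀ x, h x = MvPolynomial.eval x p)
    (hhom : ∀ (c : ℝ) (x : Fin n → ℝ), h (c • x) = c ^ d * h x)
    (H : Set (Fin n → ℝ)) (hHne : H.Nonempty) (hH1 : H ⊆ {x | h x = 1})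
    (hHopen : ∃ U : Set (Fin n → ℝ), IsOpen U ∧ H = U ∩ {x | h x = 1})
    (A : (Fin n → ℝ) →ₗ[ℝ] (Fin n → ℝ)) (hA : ∀ x ∈ H, A x ∈ H) :
    ∀ x : Fin n → ℝ, h (A x) = h x := by
  obtain ⟨p, hp⟩ := hpoly
  obtain rfl : h = fun x => MvPolynomial.eval x p := funext hp
  exact stmt_7_general (Nat.cast_ne_zero.2 (Nat.one_le_iff_ne_zero.1 hd))
    (AnalyticOnNhd.eval_mvPolynomial p) (fun c _ x => by rw [hhom, Real.rpow_natCast])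
    hHne hHopen (LinearMap.toContinuousLinearMap A) fun x hx => hH1 (hA x hx)
end

section
/- Let x, y, z be finite-dimensional real inner product spaces with dim x ≥ 1 and let ψ : x × y → z be a bilinear map which is isometric, i.e. ‖ψ(X,Y)‖ = ‖X‖·‖Y‖ for all X ∈ x, Y ∈ y. Define the transpose ψ^t : x × z → y by ⟨ψ^t(X,Z), Y⟩ = ⟨Z, ψ(X,Y)⟩ for all X ∈ x, Y ∈ y, Z ∈ z. Then ψ^t is isometric (‖ψ^t(X,Z)‖ = ‖X‖·‖Z‖ for all X ∈ x, Z ∈ z) if and only if ψ is special, i.e. dim y = dim z. -/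
open RealInnerProductSpace

/-! Fix `X` with `‖X‖ = c ≠ 0` and put `T = ψ X`, so that `‖T Y‖ = c ‖Y‖` and `ψᵗ X` is the adjoint
`T†`. If `T†` scales norms by `c` as well, then `T` and `T†` are both injective, which forces equal
dimensions. Conversely, polarization gives `T† T = c²`; in equal dimensions the injective map `T` is
onto, and `‖T† (T Y)‖ = c² ‖Y‖ = c ‖T Y‖`. -/

section NormScaling

open Module Function

theorem injective_of_norm_map_eq_mul_norm {E F G : Type*} [NormedAddCommGroup E]
    [SeminormedAddCommGroup F] [FunLike G E F] [AddMonoidHomClass G E F] {T : G} {c : ℝ}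
    (hc : c ≠ 0) (hT : ∀ v, ‖T v‖ = c * ‖v‖) : Injective T := by
  refine (injective_iff_map_eq_zero T).mpr fun v hv => ?_
  have hcv : c * ‖v‖ = 0 := by rw [← hT v, hv, norm_zero]
  exact norm_eq_zero.mp ((mul_eq_zero.mp hcv).resolve_left hc)

theorem inner_map_map_of_norm_map_eq_mul_norm {𝕜 E F : Type*} [RCLike 𝕜]
    [SeminormedAddCommGroup E] [InnerProductSpace 𝕜 E]
    [SeminormedAddCommGroup F] [InnerProductSpace 𝕜 F]
    {T : E →ₗ[𝕜] F} {c : ℝ} (hT : ∀ v, ‖T v‖ = c * ‖v‖) (u v : E) :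
    inner 𝕜 (T u) (T v) = (c : 𝕜) ^ 2 * inner 𝕜 u v := by
  simp only [inner_eq_sum_norm_sq_div_four, ← map_smul, ← map_add, ← map_sub, hT,
    RCLike.ofReal_mul]
  ring

variable {𝕜 E F : Type*} [RCLike 𝕜]
  [NormedAddCommGroup E] [InnerProductSpace 𝕜 E] [FiniteDimensional 𝕜 E]
  [NormedAddCommGroup F] [InnerProductSpace 𝕜 F] [FiniteDimensional 𝕜 F]
  {T : E →ₗ[𝕜] F} {c : ℝ}

theorem adjoint_map_of_norm_map_eq_mul_norm (hT : ∀ v, ‖T v‖ = c * ‖v‖) (v : E) :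
    T.adjoint (T v) = (c : 𝕜) ^ 2 • v := by
  refine ext_inner_left 𝕜 fun u => ?_
  rw [LinearMap.adjoint_inner_right, inner_map_map_of_norm_map_eq_mul_norm hT, inner_smul_right]

theorem norm_adjoint_eq_mul_norm_of_surjective (hT : ∀ v, ‖T v‖ = c * ‖v‖)
    (hsurj : Surjective T) (w : F) : ‖T.adjoint w‖ = c * ‖w‖ := by
  obtain ⟨v, rfl⟩ := hsurj w
  calc ‖T.adjoint (T v)‖ = ‖(c : 𝕜) ^ 2 • v‖ := by rw [adjoint_map_of_norm_map_eq_mul_norm hT]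
    _ = c ^ 2 * ‖v‖ := by rw [norm_smul, norm_pow, RCLike.norm_ofReal, sq_abs]
    _ = c * ‖T v‖ := by rw [hT]; ring

theorem norm_adjoint_eq_mul_norm_of_finrank_eq (hT : ∀ v, ‖T v‖ = c * ‖v‖)
    (hdim : finrank 𝕜 E = finrank 𝕜 F) (w : F) : ‖T.adjoint w‖ = c * ‖w‖ := by
  rcases eq_or_ne c 0 with rfl | hc
  · have hT0 : T = 0 := LinearMap.ext fun v => norm_eq_zero.mp (by rw [hT, zero_mul])
    rw [hT0, map_zero, LinearMap.zero_apply, norm_zero, zero_mul]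
  · have hinj : Injective T := injective_of_norm_map_eq_mul_norm hc hT
    exact norm_adjoint_eq_mul_norm_of_surjective hT
      ((LinearMap.injective_iff_surjective_of_finrank_eq_finrank hdim).mp hinj) w

theorem finrank_eq_of_norm_adjoint_eq_mul_norm (hc : c ≠ 0) (hT : ∀ v, ‖T v‖ = c * ‖v‖)
    (hadj : ∀ w, ‖T.adjoint w‖ = c * ‖w‖) : finrank 𝕜 E = finrank 𝕜 F :=
  le_antisymm
    (LinearMap.finrank_le_finrank_of_injective (injective_of_norm_map_eq_mul_norm hc hT))
    (LinearMap.finrank_le_finrank_of_injective (injective_of_norm_map_eq_mul_norm hc hadj))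

end NormScaling

theorem stmt_15_general {𝕜 x y z : Type*} [RCLike 𝕜] [Norm x]
    [NormedAddCommGroup y] [InnerProductSpace 𝕜 y] [FiniteDimensional 𝕜 y]
    [NormedAddCommGroup z] [InnerProductSpace 𝕜 z] [FiniteDimensional 𝕜 z]
    (hx : ∃ X : x, ‖X‖ ≠ 0) (ψ : x → y →ₗ[𝕜] z)
    (hiso : ∀ (X : x) (Y : y), ‖ψ X Y‖ = ‖X‖ * ‖Y‖) :
    (∀ (X : x) (Z : z), ‖(ψ X).adjoint Z‖ = ‖X‖ * ‖Z‖) ↔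
      Module.finrank 𝕜 y = Module.finrank 𝕜 z := by
  obtain ⟨X₀, hX₀⟩ := hx
  exact ⟨fun hadj => finrank_eq_of_norm_adjoint_eq_mul_norm hX₀ (hiso X₀) (hadj X₀),
    fun hdim X => norm_adjoint_eq_mul_norm_of_finrank_eq (hiso X) hdim⟩

/-- For an isometric bilinear map `ψ : x × y → z` of finite-dimensional real inner product
spaces with `dim x ≥ 1`, the transpose `ψᵗ : x × z → y` (defined by
`⟨ψᵗ(X,Z), Y⟩ = ⟨Z, ψ(X,Y)⟩`) is isometric iff `ψ` is special, i.e. `dim y = dim z`. -/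
theorem stmt_15 (x y z : Type*)
    [NormedAddCommGroup x] [InnerProductSpace ℝ x] [FiniteDimensional ℝ x]
    [NormedAddCommGroup y] [InnerProductSpace ℝ y] [FiniteDimensional ℝ y]
    [NormedAddCommGroup z] [InnerProductSpace ℝ z] [FiniteDimensional ℝ z]
    (hx : 1 ≤ Module.finrank ℝ x)
    (ψ : x →ₗ[ℝ] y →ₗ[ℝ] z)
    (hiso : ∀ (X : x) (Y : y), ‖ψ X Y‖ = ‖X‖ * ‖Y‖)
    (ψt : x →ₗ[ℝ] z →ₗ[ℝ] y)
    (hψt : ∀ (X : x) (Z : z) (Y : y), ⟪ψt X Z, Y⟫ = ⟪Z, ψ X Y⟫) :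
    (∀ (X : x) (Z : z), ‖ψt X Z‖ = ‖X‖ * ‖Z‖) ↔
      Module.finrank ℝ y = Module.finrank ℝ z := by
  have : Nontrivial x := Module.nontrivial_of_finrank_pos (R := ℝ) hx
  have hadj (X : x) : ψt X = (ψ X).adjoint := (LinearMap.eq_adjoint_iff _ _).mpr (hψt X)
  simpa only [hadj] using stmt_15_general (exists_norm_ne_zero x) ψ hiso
end

section
/- Let b be a nondegenerate symmetric bilinear form on ℝⁿ and let S = {x ∈ ℝⁿ : b(x,x) = 1}. If x and y lie in the same connected component of S, then there exists g in the connected component of the identity of the orthogonal group O(b) = {g ∈ GL(n,ℝ) : b(gu, gv) = b(u,v) for all u,v ∈ ℝⁿ} with g(x) = y. In particular, the identity component of O(b) acts transitively on each connected component of S. -/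
open scoped MatrixGroups

/-!
If `b x x = b y y ≠ 0` and `x + y` is not isotropic, the reflection along `x` followed by the one
along `x + y` sends `x` to `-x` and then to `y`. When `y` is close to `x`, no vector of the segment
from `x` to `x + y` is isotropic, so moving the second reflection along this segment joins the
product to `1` inside `O(b)`. Hence the orbits of the identity component on a level set of `b` at a
nonzero value are open in it, and a connected component meets only one of them.
-/

namespace PseudoSphere

section IdentityComponent

variable {G : Type*} [Group G] [TopologicalSpace G] [IsTopologicalGroup G]

/-- The identity component of a subgroup `H` of a topological group `G`, for the topology induced
by `G`, as a subgroup of `G` rather than of `H`. -/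
def identityComponent (H : Subgroup G) : Subgroup G :=
  (Subgroup.connectedComponentOfOne H).map H.subtype

lemma coe_identityComponent (H : Subgroup G) :
    (identityComponent H : Set G) = connectedComponentIn (H : Set G) 1 :=
  (connectedComponentIn_eq_image H.one_mem).symm

lemma mem_identityComponent_of_isPreconnected {H : Subgroup G} {s : Set G} (hs : IsPreconnected s)
    (hsH : s ⊆ H) (h_one : 1 ∈ s) {g : G} (hg : g ∈ s) : g ∈ identityComponent H := by
  rw [← SetLike.mem_coe, coe_identityComponent]
  exact hs.subset_connectedComponentIn h_one hsH hg

end IdentityComponent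

section Reflection

variable {E : Type*} [SeminormedAddCommGroup E] [NormedSpace ℝ E]

/-- The orthogonal group `O(b)` of a continuous bilinear form `b`, inside the group of invertible
continuous endomorphisms with the topology coming from the operator norm. -/
def orthogonalGroup (b : E →L[ℝ] E →L[ℝ] ℝ) : Subgroup (E →L[ℝ] E)ˣ where
  carrier := {g | ∀ u v, b (g • u) (g • v) = b u v}
  mul_mem' hg hh u v := by rw [mul_smul, mul_smul, hg, hh]
  one_mem' u v := by rw [one_smul, one_smul]
  inv_mem' {g} hg u v := by rw [← hg, smul_inv_smul, smul_inv_smul]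

lemma one_sub_smul_smulRight_mul_self (b : E →L[ℝ] E →L[ℝ] ℝ) (w : E) :
    (1 - (2 / b w w) • (b w).smulRight w : E →L[ℝ] E) *
      (1 - (2 / b w w) • (b w).smulRight w) = 1 := by
  ext u
  obtain hw | hw := eq_or_ne (b w w) 0
  · simp [hw]
  · have hcoeff : 2 / b w w * (b w u - 2 / b w w * b w u * b w w) = -(2 / b w w * b w u) := by
      field_simp
      ring
    simp [smul_smul, hcoeff]

/-- The reflection `u ↦ u - (2 b(w,u) / b(w,w)) w` along `w`. For isotropic `w` division by zero
makes it the identity, so that it is invertible for every `w`. -/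
noncomputable def reflection (b : E →L[ℝ] E →L[ℝ] ℝ) (w : E) : (E →L[ℝ] E)ˣ where
  val := 1 - (2 / b w w) • (b w).smulRight w
  inv := 1 - (2 / b w w) • (b w).smulRight w
  val_inv := one_sub_smul_smulRight_mul_self b w
  inv_val := one_sub_smul_smulRight_mul_self b w

variable {b : E →L[ℝ] E →L[ℝ] ℝ}

lemma reflection_smul (w u : E) : reflection b w • u = u - (2 / b w w * b w u) • w := by
  simp [reflection, Units.smul_def, smul_smul]

lemma reflection_mul_self (w : E) : reflection b w * reflection b w = 1 :=
  Units.ext (one_sub_smul_smulRight_mul_self b w)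

lemma reflection_smul_self {w : E} (hw : b w w ≠ 0) : reflection b w • w = -w := by
  rw [reflection_smul, div_mul_cancel₀ _ hw, two_smul]
  abel

lemma continuousOn_reflection : ContinuousOn (reflection b) {w | b w w ≠ 0} := by
  have h_val : Continuous fun w : {w | b w w ≠ 0} =>
      (1 - (2 / b w w) • (b w).smulRight (w : E) : E →L[ℝ] E) := by
    have h_rank_one : Continuous fun w : {w | b w w ≠ 0} => (b w).smulRight (w : E) :=
      isBoundedBilinearMap_smulRight.continuous.comp
        ((b.continuous.comp continuous_subtype_val).prodMk continuous_subtype_val)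
    fun_prop (disch := exact Subtype.prop)
  exact continuousOn_iff_continuous_domRestrict.2 (Units.continuous_iff.2 ⟨h_val, h_val⟩)

lemma reflection_mem_orthogonalGroup (hb : ∀ u v, b u v = b v u) (w : E) :
    reflection b w ∈ orthogonalGroup b := by
  intro u v
  simp only [reflection_smul, map_sub, map_smul, sub_apply, smul_apply, smul_eq_mul, hb u w]
  obtain hw | hw := eq_or_ne (b w w) 0
  · simp [hw]
  · field_simp
    ring

lemma reflection_add_smul_left (hb : ∀ u v, b u v = b v u) {x y : E} (hxy : b x x = b y y)
    (h_add : b (x + y) (x + y) ≠ 0) : reflection b (x + y) • x = -y := by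
  have h_norm : b (x + y) (x + y) = 2 * b (x + y) x := by
    simp only [map_add, add_apply, hb y x, ← hxy]
    ring
  have h_coeff : 2 / b (x + y) (x + y) * b (x + y) x = 1 := by
    rw [div_mul_eq_mul_div, ← h_norm, div_self h_add]
  rw [reflection_smul, h_coeff, one_smul]
  abel

lemma reflection_mul_reflection_mem_identityComponent (hb : ∀ u v, b u v = b v u) {s : Set E}
    (hs : IsPreconnected s) (hsb : ∀ w ∈ s, b w w ≠ 0) {v w : E} (hv : v ∈ s) (hw : w ∈ s) :
    reflection b v * reflection b w ∈ identityComponent (orthogonalGroup b) := by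
  have h_image : IsPreconnected ((fun u => reflection b u * reflection b w) '' s) :=
    hs.image _ ((continuousOn_reflection.mono hsb).mul continuousOn_const)
  refine mem_identityComponent_of_isPreconnected h_image ?_ ⟨w, hw, reflection_mul_self w⟩
    ⟨v, hv, rfl⟩
  rintro _ ⟨u, -, rfl⟩
  exact mul_mem (reflection_mem_orthogonalGroup hb u) (reflection_mem_orthogonalGroup hb w)

lemma apply_self_ne_zero_of_mem_segment (hb : ∀ u v, b u v = b v u) {c : ℝ} {x y : E}
    (hx : b x x = c) (hy : b y y = c) (hxy : 0 < c * (c + b x y)) {w : E}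
    (hw : w ∈ segment ℝ x (x + y)) : b w w ≠ 0 := by
  have hc : c ≠ 0 := left_ne_zero_of_mul hxy.ne'
  rw [segment_eq_image'] at hw
  obtain ⟨t, ⟨ht₀, -⟩, rfl⟩ := hw
  have h_norm :
      c * b (x + t • y) (x + t • y) = c ^ 2 * (1 - t) ^ 2 + 2 * t * (c * (c + b x y)) := by
    simp only [map_add, map_smul, add_apply, smul_apply, smul_eq_mul, hx, hy, hb y x]
    ring
  have h_pos : 0 < c * b (x + t • y) (x + t • y) := by
    rw [h_norm]
    obtain rfl | ht := eq_or_ne t 1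
    · linarith
    · have : 1 - t ≠ 0 := sub_ne_zero.2 ht.symm
      positivity
  rw [add_sub_cancel_left]
  exact right_ne_zero_of_mul h_pos.ne'

lemma mem_orbit_identityComponent_of_pos (hb : ∀ u v, b u v = b v u) {c : ℝ} {x y : E}
    (hx : b x x = c) (hy : b y y = c) (hxy : 0 < c * (c + b x y)) :
    y ∈ MulAction.orbit (identityComponent (orthogonalGroup b)) x := by
  have h_segment : ∀ w ∈ segment ℝ x (x + y), b w w ≠ 0 := fun w =>
    apply_self_ne_zero_of_mem_segment hb hx hy hxy
  have h_x : b x x ≠ 0 := h_segment _ (left_mem_segment ℝ x (x + y))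
  have h_add : b (x + y) (x + y) ≠ 0 := h_segment _ (right_mem_segment ℝ x (x + y))
  have h_mem : reflection b (x + y) * reflection b x ∈ identityComponent (orthogonalGroup b) :=
    reflection_mul_reflection_mem_identityComponent hb (convex_segment x (x + y)).isPreconnected
      h_segment (right_mem_segment ℝ _ _) (left_mem_segment ℝ _ _)
  refine ⟨⟨_, h_mem⟩, ?_⟩
  calc (reflection b (x + y) * reflection b x) • x = reflection b (x + y) • -x := by
        rw [mul_smul, reflection_smul_self h_x]
    _ = y := by rw [smul_neg, reflection_add_smul_left hb (hx.trans hy.symm) h_add, neg_neg]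

end Reflection

section Matrix

variable (ι : Type*) [Fintype ι] [DecidableEq ι]

/-- The algebra isomorphism from the continuous endomorphisms of `ℝ^ι` to matrices given by the
standard basis. -/
noncomputable def endEquivMatrix : ((ι → ℝ) →L[ℝ] (ι → ℝ)) ≃ₐ[ℝ] Matrix ι ι ℝ :=
  (Module.End.toContinuousLinearMap (ι → ℝ)).symm.trans LinearMap.toMatrixAlgEquiv'

variable {ι}

/-- The matrix, in the standard basis, of an invertible continuous endomorphism of `ℝ^ι`. -/
noncomputable def toGL : ((ι → ℝ) →L[ℝ] (ι → ℝ))ˣ →* GL ι ℝ :=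
  Units.map (endEquivMatrix ι).toMonoidHom

lemma toGL_mulVec (g : ((ι → ℝ) →L[ℝ] (ι → ℝ))ˣ) (v : ι → ℝ) :
    (toGL g : Matrix ι ι ℝ).mulVec v = g • v :=
  LinearMap.toMatrix'_mulVec _ v

lemma continuous_toGL : Continuous (toGL (ι := ι)) :=
  Continuous.units_map _ (endEquivMatrix ι).toLinearMap.continuous_of_finiteDimensional

lemma toGL_mem_connectedComponentIn (b : (ι → ℝ) →ₗ[ℝ] (ι → ℝ) →ₗ[ℝ] ℝ)
    {g : ((ι → ℝ) →L[ℝ] (ι → ℝ))ˣ}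
    (hg : g ∈ identityComponent (orthogonalGroup b.toContinuousBilinearMap)) :
    toGL g ∈ connectedComponentIn
      {g : GL ι ℝ | ∀ u v : ι → ℝ,
        b ((g : Matrix ι ι ℝ).mulVec u) ((g : Matrix ι ι ℝ).mulVec v) = b u v} 1 := by
  rw [← SetLike.mem_coe, coe_identityComponent] at hg
  have h_image := continuous_toGL.continuousOn.mapsTo_connectedComponentIn (one_mem _) hg
  rw [map_one] at h_image
  refine connectedComponentIn_mono _ ?_ h_image
  rintro _ ⟨h, hh, rfl⟩ u v
  rw [toGL_mulVec, toGL_mulVec]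
  exact hh u v

end Matrix

end PseudoSphere

open PseudoSphere in
theorem stmt_16_general {E : Type*} [SeminormedAddCommGroup E] [NormedSpace ℝ E]
    {b : E →L[ℝ] E →L[ℝ] ℝ} (hb : ∀ u v, b u v = b v u) {c : ℝ} (hc : c ≠ 0) {x y : E}
    (hxy : y ∈ connectedComponentIn {v | b v v = c} x) :
    y ∈ MulAction.orbit (identityComponent (orthogonalGroup b)) x := by
  have hS := connectedComponentIn_subset {v | b v v = c} x
  have hx := mem_connectedComponentIn (connectedComponentIn_nonempty_iff.1 ⟨y, hxy⟩)
  refine isPreconnected_connectedComponentIn.induction₂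
    (fun u v => v ∈ MulAction.orbit (identityComponent (orthogonalGroup b)) u) ?_ ?_ ?_ hx hxy
  · intro u hu
    have h_open : IsOpen {v | 0 < c * (c + b u v)} := isOpen_lt (by fun_prop) (by fun_prop)
    have h_self : 0 < c * (c + b u u) := by
      have : 0 < c ^ 2 := by positivity
      rw [hS hu]
      linarith
    filter_upwards [mem_nhdsWithin_of_mem_nhds (h_open.mem_nhds h_self), self_mem_nhdsWithin]
      with v huv hv
    exact mem_orbit_identityComponent_of_pos hb (hS hu) (hS hv) huv
  · exact fun u v w _ _ _ huv hvw => MulAction.orbit_eq_iff.2 huv ▸ hvw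
  · exact fun u v _ _ huv => MulAction.mem_orbit_symm.1 huv

/-- If `b` is a nondegenerate symmetric bilinear form on `ℝⁿ` and `x, y` lie in the same
connected component of the pseudo sphere `S = {b(x,x) = 1}`, then some element of the
identity component of the orthogonal group `O(b) ⊆ GL(n,ℝ)` maps `x` to `y`. -/
theorem stmt_16 (n : ℕ)
    (b : (Fin n → ℝ) →ₗ[ℝ] (Fin n → ℝ) →ₗ[ℝ] ℝ)
    (hsymm : ∀ u v, b u v = b v u)
    (hnondeg : ∀ u, (∀ v, b u v = 0) → u = 0)
    (x y : Fin n → ℝ)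
    (hx : b x x = 1) (hy : b y y = 1)
    (hcomp : y ∈ connectedComponentIn {v : Fin n → ℝ | b v v = 1} x) :
    ∃ g ∈ connectedComponentIn
        {g : GL (Fin n) ℝ | ∀ u v : Fin n → ℝ,
          b (((g : GL (Fin n) ℝ) : Matrix (Fin n) (Fin n) ℝ).mulVec u)
            (((g : GL (Fin n) ℝ) : Matrix (Fin n) (Fin n) ℝ).mulVec v) = b u v}
        (1 : GL (Fin n) ℝ),
      ((g : GL (Fin n) ℝ) : Matrix (Fin n) (Fin n) ℝ).mulVec x = y := by
  obtain ⟨⟨g, hg⟩, hgx⟩ :=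
    stmt_16_general (b := b.toContinuousBilinearMap) hsymm one_ne_zero hcomp
  exact ⟨PseudoSphere.toGL g, PseudoSphere.toGL_mem_connectedComponentIn b hg,
    (PseudoSphere.toGL_mulVec g x).trans hgx⟩
end

section
/- Let K be a compact subgroup of GL(n,ℝ), let V ⊆ ℝⁿ be a nonempty open convex cone (λV = V for all λ > 0) containing no affine line, and let h : ℝⁿ → ℝ be a polynomial function homogeneous of degree d ≥ 1 with h > 0 on V, such that k(V) = V and h∘k = h for every k ∈ K. Then K has a fixed point on the hypersurface H = V ∩ {h = 1}: there exists v ∈ V with h(v) = 1 and k·v = v for all k ∈ K. -/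
open scoped MatrixGroups

/-! The centre of gravity of an orbit of the compact group, taken with respect to normalized Haar
measure, is a fixed point. It stays in the open convex set containing the orbit, since a functional
strictly separating it from the set would be smaller than its own mean at every point of the orbit.
Homogeneity of nonzero degree then allows it to be rescaled to the level `h = 1`. -/

open MeasureTheory Set

section Barycenter

variable {G E : Type*} [Group G] [NormedAddCommGroup E] [NormedSpace ℝ E]

theorem integral_mem_of_convex_of_isOpen [CompleteSpace E] {X : Type*} [MeasurableSpace X]
    {μ : Measure X} [IsProbabilityMeasure μ] {s : Set E} (hconv : Convex ℝ s) (hopen : IsOpen s)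
    {f : X → E} (hmem : ∀ᵐ x ∂μ, f x ∈ s) (hint : Integrable f μ) : ∫ x, f x ∂μ ∈ s := by
  by_contra hnot
  obtain ⟨L, hL⟩ := geometric_hahn_banach_open_point hconv hopen hnot
  obtain ⟨x, hx, hle⟩ := exists_notMem_null_integral_le (L.integrable_comp hint) hmem
  rw [L.integral_comp_comm hint] at hle
  exact (hL (f x) (not_not.mp hx)).not_ge hle

variable [DistribMulAction G E]

/-- The centre of gravity of the orbit `G • x`, the orbit carrying the image of the measure `μ`
on `G`. It is a genuine average only when `μ` is a probability measure and `g ↦ g • x` is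
`μ`-integrable. -/
noncomputable def orbitBarycenter [MeasurableSpace G] (μ : Measure G) (x : E) : E :=
  ∫ g, g • x ∂μ

theorem orbitBarycenter_mem_fixedPoints [SMulCommClass G ℝ E] [ContinuousConstSMul G E]
    [MeasurableSpace G] [MeasurableMul G] (μ : Measure G) [μ.IsMulLeftInvariant] (x : E) :
    orbitBarycenter μ x ∈ MulAction.fixedPoints G E := by
  intro g
  calc g • orbitBarycenter μ x
    _ = ∫ k, g • k • x ∂μ :=
        ((ContinuousLinearEquiv.smulLeft (R₁ := ℝ) g).integral_comp_comm _).symm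
    _ = ∫ k, (g * k) • x ∂μ := by simp only [mul_smul]
    _ = orbitBarycenter μ x := integral_mul_left_eq_self (fun k => k • x) g

variable [TopologicalSpace G] [IsTopologicalGroup G] [CompactSpace G]

theorem isProbabilityMeasure_haarMeasure_top [MeasurableSpace G] [BorelSpace G] :
    IsProbabilityMeasure (Measure.haarMeasure (⊤ : TopologicalSpace.PositiveCompacts G)) :=
  ⟨Measure.haarMeasure_self⟩

theorem exists_mem_fixedPoints_of_isOpen_of_convex [CompleteSpace E] [SMulCommClass G ℝ E]
    [ContinuousSMul G E] {s : Set E} (hne : s.Nonempty) (hopen : IsOpen s) (hconv : Convex ℝ s)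
    (hinv : ∀ g : G, ∀ x ∈ s, g • x ∈ s) : ∃ v ∈ s, v ∈ MulAction.fixedPoints G E := by
  obtain ⟨x, hx⟩ := hne
  borelize G
  let μ : Measure G := Measure.haarMeasure ⊤
  have : IsProbabilityMeasure μ := isProbabilityMeasure_haarMeasure_top
  have hint : Integrable (fun g : G => g • x) μ :=
    (continuous_id.smul continuous_const).integrable_of_hasCompactSupport
      (HasCompactSupport.of_compactSpace _)
  exact ⟨orbitBarycenter μ x,
    integral_mem_of_convex_of_isOpen hconv hopen (ae_of_all μ fun g => hinv g x hx) hint,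
    orbitBarycenter_mem_fixedPoints μ x⟩

end Barycenter

theorem exists_pos_smul_eq_one_of_homogeneous {E : Type*} [SMul ℝ E] {h : E → ℝ} {r : ℝ}
    (hr : r ≠ 0) {v : E} (hv : 0 < h v) (hhom : ∀ c : ℝ, 0 < c → h (c • v) = c ^ r * h v) :
    ∃ c : ℝ, 0 < c ∧ h (c • v) = 1 := by
  have hc : 0 < (h v)⁻¹ ^ r⁻¹ := Real.rpow_pos_of_pos (inv_pos.mpr hv) _
  refine ⟨_, hc, ?_⟩
  rw [hhom _ hc, Real.rpow_inv_rpow (inv_nonneg.mpr hv.le) hr, inv_mul_cancel₀ hv.ne']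

instance continuousSMul_matrix_pi {n R : Type*} [Fintype n] [DecidableEq n] [Semiring R]
    [TopologicalSpace R] [IsTopologicalSemiring R] : ContinuousSMul (Matrix n n R) (n → R) :=
  ⟨continuous_fst.matrix_mulVec continuous_snd⟩

theorem stmt_19_general {G E : Type*} [Group G] [TopologicalSpace G] [IsTopologicalGroup G]
    [CompactSpace G] [NormedAddCommGroup E] [NormedSpace ℝ E] [CompleteSpace E]
    [DistribMulAction G E] [SMulCommClass G ℝ E] [ContinuousSMul G E]
    {V : Set E} (hVne : V.Nonempty) (hVopen : IsOpen V) (hVconv : Convex ℝ V)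
    (hVcone : ∀ c : ℝ, 0 < c → ∀ x ∈ V, c • x ∈ V) (hGV : ∀ g : G, ∀ x ∈ V, g • x ∈ V)
    {h : E → ℝ} {r : ℝ} (hr : r ≠ 0)
    (hhom : ∀ c : ℝ, 0 < c → ∀ x ∈ V, h (c • x) = c ^ r * h x) (hpos : ∀ x ∈ V, 0 < h x) :
    ∃ v ∈ V, h v = 1 ∧ ∀ g : G, g • v = v := by
  obtain ⟨v, hvV, hfix⟩ := exists_mem_fixedPoints_of_isOpen_of_convex hVne hVopen hVconv hGV
  obtain ⟨c, hc, hcv⟩ :=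
    exists_pos_smul_eq_one_of_homogeneous hr (hpos v hvV) fun c hc => hhom c hc v hvV
  exact ⟨c • v, hVcone c hc v hvV, hcv, fun g => by rw [smul_comm, hfix g]⟩

/-- A compact subgroup `K ⊆ GL(n,ℝ)` preserving an open convex cone `V` containing no
affine line and a positive homogeneous polynomial `h` of degree `d ≥ 1` on `V` has a fixed
point on the hypersurface `H = V ∩ {h = 1}`. -/
theorem stmt_19 (n d : ℕ) (hd : 1 ≤ d)
    (K : Subgroup (GL (Fin n) ℝ)) (hK : IsCompact (K : Set (GL (Fin n) ℝ)))
    (V : Set (Fin n → ℝ)) (hVne : V.Nonempty) (hVopen : IsOpen V) (hVconv : Convex ℝ V)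
    (hVcone : ∀ c : ℝ, 0 < c → ∀ x ∈ V, c • x ∈ V)
    (hVline : ¬ ∃ (x v : Fin n → ℝ), v ≠ 0 ∧ ∀ t : ℝ, x + t • v ∈ V)
    (h : (Fin n → ℝ) → ℝ)
    (hpoly : ∃ p : MvPolynomial (Fin n) ℝ, ∀ x, h x = MvPolynomial.eval x p)
    (hhom : ∀ (c : ℝ) (x : Fin n → ℝ), h (c • x) = c ^ d * h x)
    (hpos : ∀ x ∈ V, 0 < h x)
    (hKV : ∀ g ∈ K, (fun x => ((g : GL (Fin n) ℝ) : Matrix (Fin n) (Fin n) ℝ).mulVec x) '' V = V)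
    (hKh : ∀ g ∈ K, ∀ x : Fin n → ℝ,
      h (((g : GL (Fin n) ℝ) : Matrix (Fin n) (Fin n) ℝ).mulVec x) = h x) :
    ∃ v ∈ V, h v = 1 ∧
      ∀ g ∈ K, ((g : GL (Fin n) ℝ) : Matrix (Fin n) (Fin n) ℝ).mulVec v = v := by
  have : CompactSpace K := isCompact_iff_compactSpace.mp hK
  obtain ⟨v, hvV, hv, hfix⟩ := stmt_19_general (G := K) (r := d) hVne hVopen hVconv hVcone
    (fun g x hx => hKV g g.2 ▸ mem_image_of_mem _ hx)
    (Nat.cast_ne_zero.mpr (Nat.one_le_iff_ne_zero.mp hd))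
    (fun c _ x _ => by rw [hhom, Real.rpow_natCast]) hpos
  exact ⟨v, hvV, hv, fun g hg => hfix ⟨g, hg⟩⟩
end
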